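/- arXiv:1701.02522 — 9 statements merged into one kernel-verified Lean document; each statement's English description precedes it below -/
import Mathlib

section
/- Let N be a positive integer and let A⁰ and A¹ be the (N+1)×(N+1) isomerisation matrices. Then the matrix commutator satisfies [A⁰, A¹] = A⁰A¹ − A¹A⁰ = −2·A¹. -/
/-!
The matrices come from a representation of `𝔰𝔩₂`. Let `U` and `D` be the super- and subdiagonal
parts of `A⁰` and let `H = diag(N - 2ℓ)`. Then `A⁰ = U + D - N` and `A¹ = H + U - D`, and the
relations `UH - HU = -2U`, `DH - HD = 2D`, `UD - DU = H` give
`[A⁰, A¹] = [U, H] + [D, H] - 2[U, D] = -2U + 2D - 2H = -2A¹`.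
The boundary rows need no special formula, since the weight `N - ℓ` of `D` vanishes at `ℓ = N`
and the weight `ℓ` of `U` vanishes at `ℓ = 0`.
-/

/-- The isomerisation matrix `A⁰`: an `(N+1)×(N+1)` real matrix with
`A⁰_{k,ℓ} = -N` if `k = ℓ`, `ℓ` if `k = ℓ-1`, `N-ℓ` if `k = ℓ+1`, and `0` otherwise. -/
def isoA0 (N : ℕ) : Matrix (Fin (N+1)) (Fin (N+1)) ℝ := fun k l =>
  if (k : ℕ) = (l : ℕ) then -(N : ℝ)
  else if (k : ℕ) + 1 = (l : ℕ) then ((l : ℕ) : ℝ)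
  else if (k : ℕ) = (l : ℕ) + 1 then (N : ℝ) - ((l : ℕ) : ℝ)
  else 0

/-- The isomerisation matrix `A¹`: an `(N+1)×(N+1)` real matrix with
`A¹_{k,ℓ} = N-2ℓ` if `k = ℓ`, `ℓ` if `k = ℓ-1`, `-N+ℓ` if `k = ℓ+1`, and `0` otherwise. -/
def isoA1 (N : ℕ) : Matrix (Fin (N+1)) (Fin (N+1)) ℝ := fun k l =>
  if (k : ℕ) = (l : ℕ) then (N : ℝ) - 2 * ((l : ℕ) : ℝ)
  else if (k : ℕ) + 1 = (l : ℕ) then ((l : ℕ) : ℝ)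
  else if (k : ℕ) = (l : ℕ) + 1 then -(N : ℝ) + ((l : ℕ) : ℝ)
  else 0

/-- The superdiagonal part of `A⁰`: the entry at `(ℓ - 1, ℓ)` is `ℓ`. -/
def isoU (N : ℕ) : Matrix (Fin (N+1)) (Fin (N+1)) ℝ := fun k l =>
  if (k : ℕ) + 1 = (l : ℕ) then ((l : ℕ) : ℝ) else 0

/-- The subdiagonal part of `A⁰`: the entry at `(ℓ + 1, ℓ)` is `N - ℓ`. -/
def isoD (N : ℕ) : Matrix (Fin (N+1)) (Fin (N+1)) ℝ := fun k l =>
  if (k : ℕ) = (l : ℕ) + 1 then (N : ℝ) - ((l : ℕ) : ℝ) else 0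

/-- The diagonal part of `A¹`, with entries `N - 2ℓ`. -/
def isoH (N : ℕ) : Matrix (Fin (N+1)) (Fin (N+1)) ℝ :=
  Matrix.diagonal fun l => (N : ℝ) - 2 * ((l : ℕ) : ℝ)

lemma isoA0_eq (N : ℕ) : isoA0 N = isoU N + isoD N - (N : ℝ) • 1 := by
  ext k l
  simp only [isoA0, isoU, isoD, Matrix.sub_apply, Matrix.add_apply, Matrix.smul_apply,
    Matrix.one_apply, Fin.ext_iff, smul_eq_mul]
  split_ifs <;> first | omega | simp

lemma isoA1_eq (N : ℕ) : isoA1 N = isoH N + isoU N - isoD N := by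
  ext k l
  simp only [isoA1, isoU, isoD, isoH, Matrix.sub_apply, Matrix.add_apply,
    Matrix.diagonal_apply, Fin.ext_iff]
  split_ifs with h <;> first | omega | ring1 | simp [h]

lemma isoU_isoH (N : ℕ) : isoU N * isoH N - isoH N * isoU N = (-2 : ℝ) • isoU N := by
  ext k l
  simp only [isoH, isoU, Matrix.sub_apply, Matrix.mul_diagonal, Matrix.diagonal_mul,
    Matrix.smul_apply, smul_eq_mul]
  split_ifs with h
  · rw [← h]; push_cast; ring
  · ring

lemma isoD_isoH (N : ℕ) : isoD N * isoH N - isoH N * isoD N = (2 : ℝ) • isoD N := by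
  ext k l
  simp only [isoH, isoD, Matrix.sub_apply, Matrix.mul_diagonal, Matrix.diagonal_mul,
    Matrix.smul_apply, smul_eq_mul]
  split_ifs with h
  · rw [h]; push_cast; ring
  · ring

lemma isoU_mul_isoD (N : ℕ) : isoU N * isoD N =
    Matrix.diagonal fun l : Fin (N+1) => (((l : ℕ) : ℝ) + 1) * ((N : ℝ) - ((l : ℕ) : ℝ)) := by
  ext k l
  rw [Matrix.mul_apply, Matrix.diagonal_apply]
  by_cases hk : (k : ℕ) < N
  · rw [Finset.sum_eq_single ⟨k + 1, by omega⟩]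
    · by_cases h : k = l
      · simp [isoU, isoD, h]
      · simp [isoU, isoD, h, Fin.val_inj]
    · intro m _ hm
      have : (k : ℕ) + 1 ≠ m := fun h => hm (Fin.ext h.symm)
      simp [isoU, this]
    · simp
  · -- In the last row `k = N` both sides vanish: `U` has no entry there, and `N - k = 0`.
    have hkN : (k : ℕ) = N := by omega
    rw [Finset.sum_eq_zero]
    · simp [hkN]
    · intro m _
      have : (k : ℕ) + 1 ≠ m := by omega
      simp [isoU, this]

lemma isoD_mul_isoU (N : ℕ) : isoD N * isoU N =
    Matrix.diagonal fun l : Fin (N+1) => ((N : ℝ) - ((l : ℕ) : ℝ) + 1) * ((l : ℕ) : ℝ) := by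
  ext k l
  rw [Matrix.mul_apply, Matrix.diagonal_apply]
  by_cases hk : 0 < (k : ℕ)
  · obtain ⟨j, hj⟩ : ∃ j, (k : ℕ) = j + 1 := ⟨k - 1, by omega⟩
    rw [Finset.sum_eq_single ⟨j, by omega⟩]
    · by_cases h : k = l
      · subst h
        simp only [isoU, isoD, hj, if_true]
        push_cast
        ring
      · have : j + 1 ≠ (l : ℕ) := fun h' => h (Fin.ext (hj.trans h'))
        simp [isoU, isoD, h, this]
    · intro m _ hm
      have : (k : ℕ) ≠ m + 1 := fun h => hm (Fin.ext (by simp; omega))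
      simp [isoD, this]
    · simp
  · -- In the first row `k = 0` both sides vanish: `D` has no entry there.
    have hk0 : (k : ℕ) = 0 := by omega
    rw [Finset.sum_eq_zero]
    · simp [hk0]
    · intro m _
      simp [isoD, hk0]

lemma isoU_isoD (N : ℕ) : isoU N * isoD N - isoD N * isoU N = isoH N := by
  rw [isoU_mul_isoD, isoD_mul_isoU, isoH, Matrix.diagonal_sub]
  congr 1
  ext l
  ring

theorem commutator_isoA0_isoA1 (N : ℕ) (hN : 0 < N) :
    isoA0 N * isoA1 N - isoA1 N * isoA0 N = (-2 : ℝ) • isoA1 N := by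
  have hUH := isoU_isoH N
  have hDH := isoD_isoH N
  have hUD := isoU_isoD N
  rw [isoA0_eq, isoA1_eq]
  generalize isoU N = U at *
  generalize isoD N = D at *
  generalize isoH N = H at *
  calc _ = (U * H - H * U) + (D * H - H * D) - (2 : ℝ) • (U * D - D * U) := by
        simp only [mul_add, add_mul, mul_sub, sub_mul, smul_mul_assoc, mul_smul_comm, one_mul,
          mul_one]
        module
    _ = _ := by
        rw [hUH, hDH, hUD]
        module
end

section
/- Let N be a positive integer, let A⁰ and A¹ be the (N+1)×(N+1) isomerisation matrices, and let c be a real number with −1 ≤ c ≤ 1. Then the matrix L = A⁰ + c·A¹ is a graph Laplacian: every off-diagonal entry of L is nonnegative (L_{k,ℓ} ≥ 0 whenever k ≠ ℓ), and every column of L sums to zero (for each ℓ, the sum over k of L_{k,ℓ} equals 0). -/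
/-- `L` written as the sum of its diagonal, superdiagonal and subdiagonal. -/
theorem isoL_apply (N : ℕ) (c : ℝ) (k l : Fin (N+1)) :
    (isoA0 N + c • isoA1 N) k l =
      (if (k : ℕ) = l then -((1 + c) * ((l : ℕ) : ℝ) + (1 - c) * ((N : ℝ) - ((l : ℕ) : ℝ))) else 0)
      + (if (k : ℕ) + 1 = l then (1 + c) * ((l : ℕ) : ℝ) else 0)
      + (if (k : ℕ) = l + 1 then (1 - c) * ((N : ℝ) - ((l : ℕ) : ℝ)) else 0) := by
  simp only [Matrix.add_apply, Matrix.smul_apply, smul_eq_mul, isoA0, isoA1]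
  split_ifs <;> first | omega | ring

/-- The superdiagonal contributes `(1 + c) l` to the column sum, also for `l = 0`. -/
theorem sum_superdiagonal (N : ℕ) (c : ℝ) (l : Fin (N+1)) :
    ∑ k : Fin (N+1), (if (k : ℕ) + 1 = l then (1 + c) * ((l : ℕ) : ℝ) else 0)
      = (1 + c) * ((l : ℕ) : ℝ) := by
  obtain ⟨l, hl⟩ := l
  cases l with
  | zero => simp
  | succ m =>
    rw [Finset.sum_eq_single (⟨m, by omega⟩ : Fin (N+1))]
    · simp
    · intro k _ hk
      refine if_neg fun h => hk (Fin.ext ?_)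
      simpa using h
    · simp

/-- The subdiagonal contributes `(1 - c) (N - l)` to the column sum, also for `l = N`. -/
theorem sum_subdiagonal (N : ℕ) (c : ℝ) (l : Fin (N+1)) :
    ∑ k : Fin (N+1), (if (k : ℕ) = l + 1 then (1 - c) * ((N : ℝ) - ((l : ℕ) : ℝ)) else 0)
      = (1 - c) * ((N : ℝ) - ((l : ℕ) : ℝ)) := by
  obtain ⟨l, hl⟩ := l
  rcases Nat.lt_succ_iff_lt_or_eq.mp hl with h | rfl
  · rw [Finset.sum_eq_single (⟨l + 1, by omega⟩ : Fin (N+1))]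
    · simp
    · intro k _ hk
      exact if_neg fun h => hk (Fin.ext h)
    · simp
  · simp

/-- For `-1 ≤ c ≤ 1`, the matrix `L = A⁰ + c·A¹` is a graph Laplacian:
nonnegative off-diagonal entries and zero column sums. -/
theorem isoA0_add_smul_isoA1_isGraphLaplacian (N : ℕ) (hN : 0 < N) (c : ℝ)
    (hc₁ : -1 ≤ c) (hc₂ : c ≤ 1) :
    (∀ k l : Fin (N+1), k ≠ l → 0 ≤ (isoA0 N + c • isoA1 N) k l) ∧
    (∀ l : Fin (N+1), ∑ k : Fin (N+1), (isoA0 N + c • isoA1 N) k l = 0) := by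
  refine ⟨fun k l hkl => ?_, fun l => ?_⟩
  · have hl : ((l : ℕ) : ℝ) ≤ N := by exact_mod_cast Nat.lt_succ_iff.mp l.isLt
    have hsup : 0 ≤ (1 + c) * ((l : ℕ) : ℝ) := mul_nonneg (by linarith) (Nat.cast_nonneg _)
    have hsub : 0 ≤ (1 - c) * ((N : ℝ) - ((l : ℕ) : ℝ)) :=
      mul_nonneg (by linarith) (by linarith)
    rw [isoL_apply, if_neg fun h => hkl (Fin.ext h)]
    split_ifs <;> linarith
  · simp only [isoL_apply, Finset.sum_add_distrib, sum_superdiagonal, sum_subdiagonal,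
      Fin.val_inj, Finset.sum_ite_eq', Finset.mem_univ, if_true]
    ring
end

section
/- For y > 0 define φ(y) = (1 − y − (1+y)e^{−2y}) / ((1 − e^{−2y})(1 − 2y − e^{−2y})), and for 0 < x ≤ t define Θ(t,x) = − exp( −4 ∫ₓᵗ φ(y) dy ) · (1 − 2x − e^{−2x}) / ( x(1 − e^{−2x}) ). Then Θ satisfies the Volterra-type integral equation: for all 0 < x ≤ t, ( t(1 − e^{−2t}) / (1 − 2t − e^{−2t}) ) · Θ(t,x) = ∫ₓᵗ Θ(y,x) dy − 1. -/
/-! With `a(t) = t(1 − e^{−2t}) / (1 − 2t − e^{−2t})`, the function `φ` is exactly the one for which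
`a' − 4 a φ = 1` (`hasDerivAt_magnusCoeff`). Since `∂ₜΘ = −4 φ(t) Θ`, it follows that
`∂ₜ(a(t) Θ(t,x)) = Θ(t,x)`, and `a(x) Θ(x,x) = −1`; integrating from `x` to `t` gives the equation. -/

open Real

/-- `φ(y) = (1 − y − (1+y)e^{−2y}) / ((1 − e^{−2y})(1 − 2y − e^{−2y}))`. -/
noncomputable def magnusPhi (y : ℝ) : ℝ :=
  (1 - y - (1 + y) * Real.exp (-2 * y)) /
    ((1 - Real.exp (-2 * y)) * (1 - 2 * y - Real.exp (-2 * y)))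

/-- `Θ(t,x) = − exp(−4 ∫ₓᵗ φ(y) dy) · (1 − 2x − e^{−2x}) / (x(1 − e^{−2x}))`. -/
noncomputable def magnusTheta (t x : ℝ) : ℝ :=
  - Real.exp (-4 * ∫ y in x..t, magnusPhi y) *
      ((1 - 2 * x - Real.exp (-2 * x)) / (x * (1 - Real.exp (-2 * x))))

lemma one_sub_exp_neg_two_mul_pos {y : ℝ} (hy : 0 < y) : 0 < 1 - Real.exp (-2 * y) := by
  have : Real.exp (-2 * y) < 1 := Real.exp_lt_one_iff.mpr (by linarith)
  linarith

lemma one_sub_two_mul_sub_exp_neg {y : ℝ} (hy : 0 < y) :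
    1 - 2 * y - Real.exp (-2 * y) < 0 := by
  have := Real.add_one_lt_exp (x := -2 * y) (by linarith)
  linarith

lemma continuousOn_magnusPhi : ContinuousOn magnusPhi (Set.Ioi 0) := by
  unfold magnusPhi
  refine ContinuousOn.div (by fun_prop) (by fun_prop) fun y hy => ?_
  exact mul_ne_zero (one_sub_exp_neg_two_mul_pos hy).ne' (one_sub_two_mul_sub_exp_neg hy).ne

lemma hasDerivAt_magnusTheta {x y : ℝ} (hx : 0 < x) (hy : 0 < y) :
    HasDerivAt (fun t => magnusTheta t x) (-4 * magnusPhi y * magnusTheta y x) y := by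
  have hsub : Set.uIcc x y ⊆ Set.Ioi 0 := fun z hz =>
    lt_of_lt_of_le (lt_min hx hy) hz.1
  have hI : HasDerivAt (fun t => ∫ s in x..t, magnusPhi s) (magnusPhi y) y :=
    intervalIntegral.integral_hasDerivAt_right
      (continuousOn_magnusPhi.mono hsub).intervalIntegrable
      (continuousOn_magnusPhi.stronglyMeasurableAtFilter isOpen_Ioi y hy)
      (continuousOn_magnusPhi.continuousAt (Ioi_mem_nhds hy))
  refine ((hI.const_mul (-4)).exp.neg.mul_const
    ((1 - 2 * x - Real.exp (-2 * x)) / (x * (1 - Real.exp (-2 * x))))).congr_deriv ?_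
  unfold magnusTheta
  ring

/-- The coefficient `a` of the equation satisfies `a' = 1 + 4 a φ`. -/
lemma hasDerivAt_magnusCoeff {y : ℝ} (hy : 0 < y) :
    HasDerivAt (fun t => t * (1 - Real.exp (-2 * t)) / (1 - 2 * t - Real.exp (-2 * t)))
      (1 + 4 * (y * (1 - Real.exp (-2 * y)) / (1 - 2 * y - Real.exp (-2 * y))) * magnusPhi y)
      y := by
  have h1 := (one_sub_exp_neg_two_mul_pos hy).ne'
  have h2 := (one_sub_two_mul_sub_exp_neg hy).ne
  have hE : HasDerivAt (fun t : ℝ => Real.exp (-2 * t)) (Real.exp (-2 * y) * (-2 * 1)) y :=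
    ((hasDerivAt_id y).const_mul (-2)).exp
  have hN := (hasDerivAt_id y).mul (hE.const_sub 1)
  have hD := (((hasDerivAt_id y).const_mul 2).const_sub 1).sub hE
  refine (hN.div hD h2).congr_deriv ?_
  simp only [id, magnusPhi, Pi.mul_apply, Pi.sub_apply]
  generalize Real.exp (-2 * y) = E at *
  rw [mul_comm 2 y] at *
  field_simp
  ring

/-- `Θ` satisfies the Volterra-type integral equation
`(t(1 − e^{−2t})/(1 − 2t − e^{−2t})) Θ(t,x) = ∫ₓᵗ Θ(y,x) dy − 1` for `0 < x ≤ t`. -/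
theorem magnusTheta_volterra (t x : ℝ) (hx : 0 < x) (hxt : x ≤ t) :
    t * (1 - Real.exp (-2 * t)) / (1 - 2 * t - Real.exp (-2 * t)) * magnusTheta t x
      = (∫ y in x..t, magnusTheta y x) - 1 := by
  have hpos : ∀ y ∈ Set.uIcc x t, 0 < y := fun y hy =>
    lt_of_lt_of_le (lt_min hx (hx.trans_le hxt)) hy.1
  have hcont : ContinuousOn (fun y => magnusTheta y x) (Set.uIcc x t) := fun y hy =>
    (hasDerivAt_magnusTheta hx (hpos y hy)).continuousAt.continuousWithinAt
  have key := intervalIntegral.integral_eq_sub_of_hasDerivAt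
    (f := fun y => y * (1 - Real.exp (-2 * y)) / (1 - 2 * y - Real.exp (-2 * y))
      * magnusTheta y x) (f' := fun y => magnusTheta y x)
    (fun y hy => ((hasDerivAt_magnusCoeff (hpos y hy)).mul
      (hasDerivAt_magnusTheta hx (hpos y hy))).congr_deriv (by ring))
    hcont.intervalIntegrable
  have hinit : x * (1 - Real.exp (-2 * x)) / (1 - 2 * x - Real.exp (-2 * x))
      * magnusTheta x x = -1 := by
    have h1 := (one_sub_exp_neg_two_mul_pos hx).ne'
    have h2 := (one_sub_two_mul_sub_exp_neg hx).ne
    simp only [magnusTheta, intervalIntegral.integral_same, mul_zero, Real.exp_zero]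
    generalize Real.exp (-2 * x) = E at *
    rw [mul_comm 2 x] at *
    field_simp
  rw [key]
  simp only [hinit]
  ring
end

section
/- Let N be a positive integer, let A⁰ and A¹ be the (N+1)×(N+1) isomerisation matrices, and let P be the (N+1)×(N+1) persymmetric identity matrix, P_{i,j} = 1 if i + j = N and 0 otherwise. Then P is an involution, P·P = I, and P conjugates the isomerisation matrices as: P·A⁰·P = A⁰ and P·A¹·P = −A¹. -/
/-- The persymmetric identity: `P_{i,j} = 1` if `i + j = N` and `0` otherwise. -/
def persymId (N : ℕ) : Matrix (Fin (N+1)) (Fin (N+1)) ℝ := fun i j =>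
  if (i : ℕ) + (j : ℕ) = N then 1 else 0

lemma persymId_mul_apply (N : ℕ) (M : Matrix (Fin (N+1)) (Fin (N+1)) ℝ) (i j : Fin (N+1)) :
    (persymId N * M) i j = M i.rev j := by
  have h : ∀ x : Fin (N+1), ((i : ℕ) + (x : ℕ) = N) ↔ x = i.rev := by
    intro x
    rw [Fin.ext_iff, Fin.val_rev]
    omega
  simp [Matrix.mul_apply, persymId, h]

lemma mul_persymId_apply (N : ℕ) (M : Matrix (Fin (N+1)) (Fin (N+1)) ℝ) (i j : Fin (N+1)) :
    (M * persymId N) i j = M i j.rev := by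
  have h : ∀ x : Fin (N+1), ((x : ℕ) + (j : ℕ) = N) ↔ x = j.rev := by
    intro x
    rw [Fin.ext_iff, Fin.val_rev]
    omega
  simp [Matrix.mul_apply, persymId, h]

/-- The persymmetric identity is an involution conjugating `A⁰` to itself
and `A¹` to `−A¹`. -/
theorem persymId_conj_iso (N : ℕ) (hN : 0 < N) :
    persymId N * persymId N = 1 ∧
    persymId N * isoA0 N * persymId N = isoA0 N ∧
    persymId N * isoA1 N * persymId N = -isoA1 N := by
  have hrev : ∀ i : Fin (N+1), ((i.rev : ℕ) : ℝ) = N - (i : ℕ) := by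
    intro i
    rw [eq_sub_iff_add_eq]
    norm_cast
    rw [Fin.val_rev]
    omega
  have hdiag : ∀ i j : Fin (N+1), (i.rev : ℕ) = (j.rev : ℕ) ↔ (i : ℕ) = (j : ℕ) := by
    intro i j
    rw [Fin.val_rev, Fin.val_rev]
    omega
  have hup : ∀ i j : Fin (N+1), (i.rev : ℕ) + 1 = (j.rev : ℕ) ↔ (i : ℕ) = (j : ℕ) + 1 := by
    intro i j
    rw [Fin.val_rev, Fin.val_rev]
    omega
  have hdown : ∀ i j : Fin (N+1), (i.rev : ℕ) = (j.rev : ℕ) + 1 ↔ (i : ℕ) + 1 = (j : ℕ) := by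
    intro i j
    rw [Fin.val_rev, Fin.val_rev]
    omega
  refine ⟨?_, ?_, ?_⟩
  · ext i j
    rw [persymId_mul_apply, persymId, Matrix.one_apply, Fin.val_rev]
    refine if_congr ?_ rfl rfl
    rw [Fin.ext_iff]
    omega
  · ext i j
    rw [mul_persymId_apply, persymId_mul_apply]
    simp only [isoA0, hdiag, hup, hdown, hrev]
    split_ifs <;> first | omega | ring
  · ext i j
    rw [mul_persymId_apply, persymId_mul_apply, Matrix.neg_apply]
    simp only [isoA1, hdiag, hup, hdown, hrev]
    split_ifs <;> first | omega | ring
end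

section
/- Let N be a positive integer and let A⁰ be the (N+1)×(N+1) isomerisation matrix. For each r with 0 ≤ r ≤ N, define the vector v⁽ʳ⁾ ∈ ℝ^{N+1} whose m-th entry (0 ≤ m ≤ N) is the coefficient of X^m in the polynomial (1+X)^{N−r}(1−X)^r; equivalently v⁽ʳ⁾_m = Σ_j (−1)^j C(r,j) C(N−r, m−j). Then v⁽ʳ⁾ is nonzero and A⁰ · v⁽ʳ⁾ = −2r · v⁽ʳ⁾, i.e., v⁽ʳ⁾ is an eigenvector of A⁰ with eigenvalue −2r. -/
/-!
The generating polynomial `P = (1+X)^a (1-X)^r`, with `a = N - r`, satisfies the differential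
equation `(1 - X²) P' = (a (1-X) - r (1+X)) P` (`isoPoly_ode`). Comparing coefficients of `X^k`
gives a three-term recurrence, which is the `k`-th row of `A⁰ v = -2r v`; at the last row the
missing entry `v_{N+1}` vanishes because `P` has degree at most `N`. The vector is nonzero since
its entry at `0` is `P(0) = 1`.
-/

open Polynomial

/-- The vector `v⁽ʳ⁾ ∈ ℝ^{N+1}` whose `m`-th entry is the coefficient of `X^m`
in `(1+X)^{N−r}(1−X)^r`. -/
noncomputable def isoEigvec (N r : ℕ) : Fin (N+1) → ℝ := fun m =>
  (((1 + X) ^ (N - r) * (1 - X) ^ r : Polynomial ℝ)).coeff (m : ℕ)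

lemma isoPoly_ode (a r : ℕ) :
    (1 - X ^ 2) * derivative ((1 + X) ^ a * (1 - X) ^ r : ℝ[X]) =
      ((a : ℝ[X]) * (1 - X) - (r : ℝ[X]) * (1 + X)) * ((1 + X) ^ a * (1 - X) ^ r) := by
  have h1 : (1 + X) * derivative ((1 + X) ^ a : ℝ[X]) = (a : ℝ[X]) * (1 + X) ^ a := by
    cases a with
    | zero => simp
    | succ n => simp [derivative_pow]; ring
  have h2 : (1 - X) * derivative ((1 - X) ^ r : ℝ[X]) = -(r : ℝ[X]) * (1 - X) ^ r := by
    cases r with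
    | zero => simp
    | succ n => simp [derivative_pow]; ring
  rw [derivative_mul]
  linear_combination (1 - X) * (1 - X) ^ r * h1 + (1 + X) * (1 + X) ^ a * h2

lemma isoPoly_natDegree_le (a r : ℕ) :
    ((1 + X) ^ a * (1 - X) ^ r : ℝ[X]).natDegree ≤ a + r := by
  compute_degree

/-- For a sequence `c` with `c (N+1) = 0`, the `k`-th row of `A⁰` acts as a three-term recurrence.
The subdiagonal term is absent at `k = 0`, hence the case distinction. -/
lemma isoA0_mulVec_apply (N : ℕ) (c : ℕ → ℝ) (hc : c (N + 1) = 0) (k : Fin (N + 1)) :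
    (isoA0 N).mulVec (fun m => c m) k =
      -(N : ℝ) * c k + ((k : ℕ) + 1) * c (k + 1) +
        (if (k : ℕ) = 0 then 0 else ((N : ℝ) - (k : ℕ) + 1) * c (k - 1)) := by
  obtain ⟨k, hk⟩ := k
  have hsplit : ∀ l : ℕ,
      (if k = l then -(N : ℝ) else if k + 1 = l then (l : ℝ)
        else if k = l + 1 then (N : ℝ) - l else 0) * c l =
      (if k = l then -(N : ℝ) * c l else 0) + (if k + 1 = l then (l : ℝ) * c l else 0) +
        (if k = l + 1 then ((N : ℝ) - l) * c l else 0) := by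
    intro l
    split_ifs <;> first | omega | simp
  simp only [Matrix.mulVec, dotProduct, isoA0]
  rw [Fin.sum_univ_eq_sum_range (fun l : ℕ =>
      (if k = l then -(N : ℝ) else if k + 1 = l then (l : ℝ)
        else if k = l + 1 then (N : ℝ) - l else 0) * c l) (N + 1)]
  simp only [hsplit, Finset.sum_add_distrib]
  congr 1
  · congr 1
    · simp [hk]
    · rw [Finset.sum_ite_eq]
      split_ifs with h
      · push_cast; ring
      · have : k = N := by simp at h; omega
        simp [this, hc]
  · cases k with
    | zero => simp
    | succ j =>
      have hj : j < N + 1 := by omega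
      simp only [add_left_inj, Finset.sum_ite_eq, Finset.mem_range, hj, if_true]
      push_cast
      ring

/-- `v⁽ʳ⁾` is a (nonzero) eigenvector of `A⁰` with eigenvalue `−2r`. -/
theorem isoA0_eigenvector (N : ℕ) (hN : 0 < N) (r : ℕ) (hr : r ≤ N) :
    isoEigvec N r ≠ 0 ∧
    (isoA0 N).mulVec (isoEigvec N r) = (-2 * (r : ℝ)) • isoEigvec N r := by
  constructor
  · intro h
    have h0 := congrFun h 0
    simp [isoEigvec, coeff_zero_eq_eval_zero] at h0
  · obtain ⟨a, rfl⟩ := Nat.exists_eq_add_of_le' hr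
    have hode := isoPoly_ode a r
    have hdeg := isoPoly_natDegree_le a r
    unfold isoEigvec
    rw [Nat.add_sub_cancel]
    generalize ((1 + X) ^ a * (1 - X) ^ r : ℝ[X]) = P at hode hdeg ⊢
    ext k
    rw [isoA0_mulVec_apply (a + r) P.coeff (coeff_eq_zero_of_natDegree_lt (by omega)) k]
    obtain ⟨k, hk⟩ := k
    have hode' : derivative P - X * (X * derivative P) =
        C ((a : ℝ) - r) * P - C ((a : ℝ) + r) * (X * P) := by
      simp only [map_sub, map_add, map_natCast]
      linear_combination hode
    have hcoeff := congrArg (fun Q => Q.coeff k) hode'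
    simp only [coeff_sub, coeff_C_mul] at hcoeff
    -- The coefficients of `X * Q` and `X * (X * Q)` depend on whether `k` is `0`, `1` or larger.
    rcases k with _ | _ | j <;>
      simp [coeff_derivative, coeff_X_mul] at hcoeff ⊢ <;>
      linear_combination hcoeff
end

section
/- Let N be a positive integer and let V be the (N+1)×(N+1) real matrix whose (m,r) entry (0 ≤ m,r ≤ N) is the coefficient of X^m in the polynomial (1+X)^{N−r}(1−X)^r, i.e., V_{m,r} = Σ_j (−1)^j C(r,j) C(N−r, m−j). Then V² = 2^N · I, and consequently V⁻¹ = 2^{−N} · V. -/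
/-!
Column `r` of `V` lists the coefficients of `p_r = (1+X)^{N-r}(1-X)^r`, so column `r` of `V²`
lists those of `∑ₖ [Xᵏ]p_r · (1+X)^{N-k}(1-X)^k`. At a point `x > 0` this polynomial takes the value
`(1+x)^N · p_r((1-x)/(1+x))`, and since `1 + (1-x)/(1+x) = 2/(1+x)` and
`1 - (1-x)/(1+x) = 2x/(1+x)`, that value is `2^N x^r`. Agreement at infinitely many points
gives the polynomial identity `isoV_column_sum`; comparing coefficients gives `V² = 2^N · I`.
-/

open Polynomial

/-- The eigenvector matrix `V`: `V_{m,r}` is the coefficient of `X^m` in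
`(1+X)^{N−r}(1−X)^r`. -/
noncomputable def isoV (N : ℕ) : Matrix (Fin (N+1)) (Fin (N+1)) ℝ := fun m r =>
  (((1 + X) ^ (N - (r : ℕ)) * (1 - X) ^ (r : ℕ) : Polynomial ℝ)).coeff (m : ℕ)

lemma isoV_natDegree_lt (N r : ℕ) (hr : r ≤ N) :
    ((1 + X) ^ (N - r) * (1 - X) ^ r : ℝ[X]).natDegree < N + 1 := by
  have h : ((1 + X) ^ (N - r) * (1 - X) ^ r : ℝ[X]).natDegree ≤ (N - r) * 1 + r * 1 := by
    refine natDegree_mul_le_of_le (natDegree_pow_le_of_le _ ?_) (natDegree_pow_le_of_le _ ?_)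
    · compute_degree
    · compute_degree
  omega

/-- Substituting the pair `(1+X, 1-X)` into the degree-`N` homogenization of
`(1+X)^{N-r}(1-X)^r` gives `2^N X^r`. -/
lemma isoV_column_sum (N r : ℕ) (hr : r ≤ N) :
    ∑ k ∈ Finset.range (N + 1), C (((1 + X) ^ (N - r) * (1 - X) ^ r : ℝ[X]).coeff k) *
      ((1 + X) ^ (N - k) * (1 - X) ^ k) = C ((2 : ℝ) ^ N) * X ^ r := by
  apply eq_of_infinite_eval_eq
  refine (Set.Ioi_infinite (0 : ℝ)).mono fun x hx => ?_
  have hx0 : (0 : ℝ) < x := hx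
  have hx1 : 1 + x ≠ 0 := by positivity
  have key := eval_eq_sum_range' (isoV_natDegree_lt N r hr) ((1 - x) / (1 + x))
  simp only [Set.mem_ofPred_eq, eval_finsetSum, eval_mul, eval_C, eval_pow, eval_add, eval_sub,
    eval_one, eval_X] at key ⊢
  have h1 : 1 + (1 - x) / (1 + x) = 2 / (1 + x) := by field_simp; ring
  have h2 : 1 - (1 - x) / (1 + x) = 2 * x / (1 + x) := by field_simp; ring
  rw [h1, h2] at key
  calc _ = (1 + x) ^ N * ∑ k ∈ Finset.range (N + 1),
          ((1 + X) ^ (N - r) * (1 - X) ^ r : ℝ[X]).coeff k * ((1 - x) / (1 + x)) ^ k := by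
        rw [Finset.mul_sum]
        refine Finset.sum_congr rfl fun k hk => ?_
        have hkN : k ≤ N := Nat.lt_succ_iff.mp (Finset.mem_range.mp hk)
        rw [div_pow, ← pow_sub_mul_pow (1 + x) hkN]
        field_simp
    _ = _ := by
        rw [← key, div_pow, div_pow, mul_pow, ← pow_sub_mul_pow (1 + x) hr,
          ← pow_sub_mul_pow (2 : ℝ) hr]
        field_simp

/-- `V² = 2^N · I`, hence `V⁻¹ = 2^{−N} · V`. -/
theorem isoV_sq (N : ℕ) (hN : 0 < N) :
    isoV N * isoV N = ((2 : ℝ) ^ N) • (1 : Matrix (Fin (N+1)) (Fin (N+1)) ℝ) ∧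
    (isoV N)⁻¹ = ((2 : ℝ) ^ N)⁻¹ • isoV N := by
  have hsq : isoV N * isoV N = ((2 : ℝ) ^ N) • (1 : Matrix (Fin (N+1)) (Fin (N+1)) ℝ) := by
    ext m r
    have h := congrArg (fun p : ℝ[X] => p.coeff m)
      (isoV_column_sum N r (Nat.lt_succ_iff.mp r.isLt))
    simp only [finsetSum_coeff, coeff_C_mul, coeff_X_pow] at h
    rw [Finset.sum_range] at h
    simp only [Matrix.mul_apply, Matrix.smul_apply, Matrix.one_apply, smul_eq_mul, isoV,
      Fin.ext_iff]
    rw [← h]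
    exact Finset.sum_congr rfl fun k _ => mul_comm _ _
  refine ⟨hsq, Matrix.inv_eq_right_inv ?_⟩
  rw [Matrix.mul_smul, hsq, smul_smul, inv_mul_cancel₀ (by positivity), one_smul]
end

section
/- Let N be a positive integer and let A¹ be the (N+1)×(N+1) isomerisation matrix. Let E be the (N+1)×(N+1) shift matrix with E_{i,j} = 1 if j = i+1 and 0 otherwise, and let W be the lower-triangular matrix with W_{m,n} = (−1)^{m−n} C(N−n, m−n) / n! for m ≥ n and W_{m,n} = 0 for m < n. Then A¹ · W = W · E; since W is invertible, this exhibits A¹ = W E W⁻¹ as the Jordan form of A¹. -/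
/-- The shift matrix `E`: `E_{i,j} = 1` if `j = i+1` and `0` otherwise. -/
def shiftE (N : ℕ) : Matrix (Fin (N+1)) (Fin (N+1)) ℝ := fun i j =>
  if (j : ℕ) = (i : ℕ) + 1 then 1 else 0

/-- The lower-triangular matrix `W` with `W_{m,n} = (−1)^{m−n} C(N−n, m−n)/n!`
for `m ≥ n` and `0` otherwise. -/
noncomputable def isoW (N : ℕ) : Matrix (Fin (N+1)) (Fin (N+1)) ℝ := fun m n =>
  if (n : ℕ) ≤ (m : ℕ) then
    (-1 : ℝ) ^ ((m : ℕ) - (n : ℕ)) * ((N - (n : ℕ)).choose ((m : ℕ) - (n : ℕ)) : ℝ)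
      / ((n : ℕ).factorial : ℝ)
  else 0

/-- The entry `W_{m,n}`, as a function of arbitrary natural indices. It vanishes for
`m = N + 1` and `n ≤ N`, which absorbs the boundary case in the last row of `A¹ W`. -/
noncomputable def isoWEntry (N m n : ℕ) : ℝ :=
  if n ≤ m then (-1 : ℝ) ^ (m - n) * ((N - n).choose (m - n) : ℝ) / (n.factorial : ℝ) else 0

/-- The absorption identity `(j+1) C(a,j+1) = (a-j) C(a,j)`; the subtraction is real, and both
sides vanish when `j ≥ a`. -/
lemma choose_absorption (a j : ℕ) :
    ((j : ℝ) + 1) * (a.choose (j + 1) : ℝ) = ((a : ℝ) - j) * (a.choose j : ℝ) := by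
  rcases le_or_gt j a with h | h
  · have := Nat.choose_succ_right_eq a j
    have h2 : ((a.choose (j + 1) * (j + 1) : ℕ) : ℝ) = ((a.choose j * (a - j) : ℕ) : ℝ) := by
      rw [this]
    push_cast [Nat.cast_sub h] at h2
    linarith
  · simp [Nat.choose_eq_zero_of_lt h, Nat.choose_eq_zero_of_lt (show a < j + 1 by omega)]

/-- The entrywise form of `A¹ W = W E`. -/
lemma isoWEntry_recurrence (N k n : ℕ) (hn : n ≤ N) :
    ((N : ℝ) - 2 * k) * isoWEntry N k n + ((k : ℝ) + 1) * isoWEntry N (k + 1) n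
      + (if k = 0 then 0 else ((k : ℝ) - 1 - N) * isoWEntry N (k - 1) n)
      = if n = 0 then 0 else isoWEntry N k (n - 1) := by
  obtain ⟨a, rfl⟩ := Nat.exists_eq_add_of_le hn
  have hfac : (n.factorial : ℝ) ≠ 0 := by positivity
  -- Since `1/(n-1)! = n/n!`, the right-hand side has a form with denominator `n!` that also
  -- covers `n = 0`.
  have hR : (if n = 0 then 0 else isoWEntry (n + a) k (n - 1)) =
      if n ≤ k + 1 then (n : ℝ) * ((-1 : ℝ) ^ (k + 1 - n) * ((a + 1).choose (k + 1 - n) : ℝ))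
        / (n.factorial : ℝ) else 0 := by
    rcases n with _ | p
    · simp
    · have hp : (p.factorial : ℝ) ≠ 0 := by positivity
      have e : p + 1 + a - p = a + 1 := by omega
      simp only [isoWEntry, Nat.add_sub_cancel, Nat.add_sub_add_right, add_le_add_iff_right, e,
        Nat.succ_ne_zero, if_false, Nat.factorial_succ]
      split_ifs
      · push_cast
        field_simp
      · rfl
  rw [hR]
  rcases lt_or_ge (k + 1) n with h | h
  · simp [isoWEntry, show ¬ n ≤ k by omega, show ¬ n ≤ k + 1 by omega,
      show ¬ n ≤ k - 1 by omega]
  rcases h.eq_or_lt with rfl | h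
  · have : ¬ (k + 1 ≤ k - 1) := by omega
    simp [isoWEntry, this]
    field_simp
  obtain ⟨j, rfl⟩ := Nat.exists_eq_add_of_le (Nat.lt_succ_iff.mp h)
  have e1 : n + j + 1 - n = j + 1 := by omega
  have habs := choose_absorption a j
  rcases j with _ | j
  · have h0 : (if n + 0 = 0 then (0 : ℝ)
        else (((n + 0 : ℕ) : ℝ) - 1 - (n + a : ℕ)) * isoWEntry (n + a) (n + 0 - 1) n) = 0 := by
      split_ifs with h
      · rfl
      · simp [isoWEntry, show ¬ n ≤ n - 1 by omega]
    rw [h0]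
    simp [isoWEntry]
    field_simp
    ring
  · have habs_prev := choose_absorption a j
    have e2 : n + (j + 1) - 1 = n + j := by omega
    have e3 : n ≤ n + (j + 1) + 1 := by omega
    simp only [isoWEntry, e1, e2, e3, Nat.le_add_right, if_true, Nat.add_sub_cancel_left,
      show n + (j + 1) ≠ 0 by omega, if_false, Nat.choose_succ_succ a (j + 1), Nat.succ_eq_add_one]
    push_cast at habs ⊢
    field_simp
    simp only [pow_succ]
    linear_combination ((-1 : ℝ) ^ j) * habs + ((-1 : ℝ) ^ j) * habs_prev

/-- The action of the tridiagonal matrix `A¹` on a vector `f`. The assumption `f (N + 1) = 0`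
makes the superdiagonal term correct in the last row `k = N` too. -/
lemma isoA1_mul_apply (N : ℕ) (f : ℕ → ℝ) (hf : f (N + 1) = 0) (k : Fin (N + 1)) :
    ∑ l : Fin (N + 1), isoA1 N k l * f l =
      ((N : ℝ) - 2 * (k : ℕ)) * f k + (((k : ℕ) : ℝ) + 1) * f (k + 1)
      + (if (k : ℕ) = 0 then 0 else (((k : ℕ) : ℝ) - 1 - N) * f (k - 1)) := by
  obtain ⟨k, hk⟩ := k
  have hsplit : ∀ l : Fin (N + 1), isoA1 N ⟨k, hk⟩ l * f l =
      (fun l : ℕ => (if k = l then ((N : ℝ) - 2 * l) * f l else 0)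
        + (if k + 1 = l then (l : ℝ) * f l else 0)
        + (if k = l + 1 then (-(N : ℝ) + l) * f l else 0)) l := by
    intro l
    simp only [isoA1]
    split_ifs <;> first | omega | ring
  rw [Finset.sum_congr rfl fun l _ => hsplit l, Fin.sum_univ_eq_sum_range
    (fun l : ℕ => (if k = l then ((N : ℝ) - 2 * l) * f l else 0)
        + (if k + 1 = l then (l : ℝ) * f l else 0)
        + (if k = l + 1 then (-(N : ℝ) + l) * f l else 0)) (N + 1),
    Finset.sum_add_distrib, Finset.sum_add_distrib, Finset.sum_ite_eq, Finset.sum_ite_eq]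
  congr 1
  · congr 1
    · simp [hk]
    · split_ifs with h
      · push_cast; rfl
      · have : k = N := by simp at h; omega
        simp [this, hf]
  · rcases k with _ | k
    · simp
    · have : k ∈ Finset.range (N + 1) := by simp; omega
      simp only [add_left_inj, Finset.sum_ite_eq, this, if_true]
      simp
      left; ring

lemma isoW_mul_shiftE_apply (N : ℕ) (k n : Fin (N + 1)) :
    (isoW N * shiftE N) k n = if (n : ℕ) = 0 then 0 else isoWEntry N k (n - 1) := by
  obtain ⟨n, hn⟩ := n
  rw [Matrix.mul_apply]
  rcases n with _ | p
  · simp [shiftE]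
  · rw [Finset.sum_eq_single (⟨p, by omega⟩ : Fin (N + 1))]
    · simp [shiftE, isoW, isoWEntry]
    · intro l _ hl
      have : p ≠ l := fun h => hl (Fin.ext h.symm)
      simp [shiftE, this]
    · simp

lemma isoA1_mul_isoW (N : ℕ) : isoA1 N * isoW N = isoW N * shiftE N := by
  ext k n
  have hn : (n : ℕ) ≤ N := by omega
  rw [isoW_mul_shiftE_apply, ← isoWEntry_recurrence N k n hn, Matrix.mul_apply]
  refine isoA1_mul_apply N (fun m => isoWEntry N m n) ?_ k
  simp [isoWEntry, Nat.choose_eq_zero_of_lt (show N - (n : ℕ) < N + 1 - n by omega)]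

lemma isUnit_isoW (N : ℕ) : IsUnit (isoW N) := by
  rw [Matrix.isUnit_iff_isUnit_det, Matrix.det_of_isLowerTriangular, isUnit_iff_ne_zero,
    Finset.prod_ne_zero_iff]
  · intro i _
    simp [isoW, Nat.factorial_ne_zero]
  · intro i j hij
    have : (i : ℕ) < j := hij
    simp only [isoW, not_le.mpr this, if_false]

/-- The Jordan form of `A¹`: `A¹·W = W·E`, and since `W` is invertible,
`A¹ = W·E·W⁻¹`. -/
theorem isoA1_jordan_form (N : ℕ) (hN : 0 < N) :
    isoA1 N * isoW N = isoW N * shiftE N ∧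
    IsUnit (isoW N) ∧
    isoA1 N = isoW N * shiftE N * (isoW N)⁻¹ := by
  refine ⟨isoA1_mul_isoW N, isUnit_isoW N, ?_⟩
  rw [← isoA1_mul_isoW, Matrix.mul_nonsing_inv_cancel_right]
  exact (Matrix.isUnit_iff_isUnit_det _).mp (isUnit_isoW N)
end

section
/- Let N be a positive integer and let A¹ be the (N+1)×(N+1) isomerisation matrix. Then A¹ is nilpotent; in particular (A¹)^{N+1} = 0, and every eigenvalue of A¹ is zero. -/
open Polynomial in
/-- The polynomial `∑ v_l X^l` with coefficient vector `v`. -/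
noncomputable def isoPoly (N : ℕ) (v : Fin (N+1) → ℝ) : ℝ[X] :=
  ∑ l : Fin (N+1), C (v l) * X ^ (l : ℕ)

open Polynomial in
/-- The differential operator `p ↦ (1 - X)² · dp/dX + N (1 - X) p` that represents `A¹`. -/
noncomputable def isoOp (N : ℕ) (p : ℝ[X]) : ℝ[X] :=
  (1 - X) ^ 2 * derivative p + C (N : ℝ) * (1 - X) * p

open Polynomial in
lemma isoOp_dvd (N k : ℕ) (p : ℝ[X]) (h : (1 - X) ^ k ∣ p) :
    (1 - X) ^ (k + 1) ∣ isoOp N p := by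
  obtain ⟨q, rfl⟩ := h
  cases k with
  | zero => exact ⟨(1 - X) * derivative q + C (N : ℝ) * q, by simp [isoOp]; ring⟩
  | succ k =>
    refine ⟨-((k : ℝ[X]) + 1) * q + (1 - X) * derivative q + C (N : ℝ) * q, ?_⟩
    simp only [isoOp, derivative_mul, derivative_pow, derivative_sub, derivative_one,
      derivative_X, Nat.add_sub_cancel, Nat.cast_add, Nat.cast_one, C_add, C_1, map_natCast]
    ring

open Polynomial in
/-- The `l`-th column of `A¹` holds the coefficients of `isoOp N (X ^ l)`. In the last column,
`l = N`, the would-be entry below the diagonal carries the factor `l - N = 0`. -/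
lemma isoA1_column (N : ℕ) (l : Fin (N+1)) :
    ∑ k : Fin (N+1), C (isoA1 N k l) * X ^ (k : ℕ) = isoOp N (X ^ (l : ℕ)) := by
  obtain ⟨l, hl⟩ := l
  let f : ℕ → ℝ[X] := fun k => (if k = l then C ((N : ℝ) - 2 * l) * X ^ k else 0)
    + (if k + 1 = l then C (l : ℝ) * X ^ k else 0)
    + (if k = l + 1 then C (-(N : ℝ) + l) * X ^ k else 0)
  have key : ∀ k : Fin (N+1), C (isoA1 N k ⟨l, hl⟩) * X ^ (k : ℕ) =
      f (k : ℕ) := by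
    intro k
    simp only [isoA1, f]
    split_ifs <;> first | omega | simp
  rw [Finset.sum_congr rfl fun k _ => key k, Fin.sum_univ_eq_sum_range f]
  have h3 : (∑ k ∈ Finset.range (N+1), if k = l + 1 then C (-(N : ℝ) + l) * X ^ k else 0)
      = C (-(N : ℝ) + l) * X ^ (l + 1) := by
    rw [Finset.sum_ite_eq']
    split_ifs with h
    · rfl
    · have : l = N := by simp at h; omega
      subst this
      simp
  simp only [f]
  rw [Finset.sum_add_distrib, Finset.sum_add_distrib, h3, Finset.sum_ite_eq',
    if_pos (Finset.mem_range.2 hl)]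
  cases l with
  | zero => simp [isoOp]; ring
  | succ m =>
    simp only [add_left_inj]
    rw [Finset.sum_ite_eq', if_pos (Finset.mem_range.2 (by omega))]
    simp only [isoOp, derivative_X_pow, Nat.add_sub_cancel, Nat.cast_add, Nat.cast_one, C_add,
      C_sub, C_mul, C_neg, C_1, map_natCast, map_ofNat]
    ring

open Polynomial in
lemma isoPoly_mulVec (N : ℕ) (v : Fin (N+1) → ℝ) :
    isoPoly N ((isoA1 N).mulVec v) = isoOp N (isoPoly N v) := by
  have h1 : isoOp N (isoPoly N v) = ∑ l, C (v l) * isoOp N (X ^ (l : ℕ)) := by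
    simp only [isoOp, isoPoly, derivative_sum, Finset.mul_sum, ← Finset.sum_add_distrib,
      derivative_C_mul]
    exact Finset.sum_congr rfl fun l _ => by ring
  rw [h1]
  simp only [← isoA1_column, isoPoly, Matrix.mulVec, dotProduct, map_sum, Finset.sum_mul,
    Finset.mul_sum]
  rw [Finset.sum_comm]
  exact Finset.sum_congr rfl fun l _ => Finset.sum_congr rfl fun k _ => by rw [C_mul]; ring

open Polynomial in
lemma isoPoly_dvd (N k : ℕ) (v : Fin (N+1) → ℝ) :
    (1 - X) ^ k ∣ isoPoly N ((isoA1 N ^ k).mulVec v) := by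
  induction k with
  | zero => simp
  | succ k ih =>
    rw [pow_succ' (isoA1 N), ← Matrix.mulVec_mulVec, isoPoly_mulVec]
    exact isoOp_dvd N k _ ih

open Polynomial in
lemma isoPoly_eq_zero (N : ℕ) (v : Fin (N+1) → ℝ) (h : (1 - X) ^ (N + 1) ∣ isoPoly N v) :
    v = 0 := by
  have hdeg : (isoPoly N v).degree < ((N + 1 : ℕ) : WithBot ℕ) := degree_sum_fin_lt v
  have hd : ((1 - X : ℝ[X]) ^ (N + 1)).degree = ((N + 1 : ℕ) : WithBot ℕ) := by
    have : (1 - X : ℝ[X]) = -(X - C 1) := by simp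
    rw [degree_pow, this, degree_neg, degree_X_sub_C]
    simp
  have h0 : isoPoly N v = 0 := eq_zero_of_dvd_of_degree_lt h (hd ▸ hdeg)
  funext i
  have := congrArg (fun p => coeff p i) h0
  simpa [isoPoly, finsetSum_coeff, coeff_X_pow, Fin.val_inj] using this

lemma isoA1_pow (N : ℕ) : isoA1 N ^ (N + 1) = 0 := by
  apply Matrix.mulVec_injective
  funext v
  rw [Matrix.zero_mulVec]
  exact isoPoly_eq_zero N _ (isoPoly_dvd N (N + 1) v)

/-- `A¹` is nilpotent, in particular `(A¹)^{N+1} = 0`, and every eigenvalue of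
`A¹` (over ℂ) is zero. -/
theorem isoA1_nilpotent (N : ℕ) (hN : 0 < N) :
    IsNilpotent (isoA1 N) ∧
    isoA1 N ^ (N + 1) = 0 ∧
    ∀ lam : ℂ, (∃ v : Fin (N+1) → ℂ, v ≠ 0 ∧
        ((isoA1 N).map (algebraMap ℝ ℂ)).mulVec v = lam • v) → lam = 0 := by
  refine ⟨⟨N + 1, isoA1_pow N⟩, isoA1_pow N, ?_⟩
  rintro lam ⟨v, hv, h⟩
  have hk : ∀ k : ℕ, (((isoA1 N).map (algebraMap ℝ ℂ)) ^ k).mulVec v = lam ^ k • v := by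
    intro k
    induction k with
    | zero => simp
    | succ k ih =>
      rw [pow_succ, ← Matrix.mulVec_mulVec, h, Matrix.mulVec_smul, ih, smul_smul, pow_succ']
  have h0 : ((isoA1 N).map (algebraMap ℝ ℂ)) ^ (N + 1) = 0 := by
    rw [← Matrix.map_pow, isoA1_pow, Matrix.map_zero _ (map_zero _)]
  have h1 := hk (N + 1)
  rw [h0, Matrix.zero_mulVec] at h1
  exact eq_zero_of_pow_eq_zero ((smul_eq_zero.1 h1.symm).resolve_right hv)
end

section
/- Let A and B be n×n real matrices and let a, b be real numbers with b ≠ 0, such that B·A − A·B = a·A + b·B. Then for every nonnegative integer m, B·A^m = (A + b·I)^m · B − (a/b) · A · ( A^m − (A + b·I)^m ). -/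
/-!
Put `C = A + b I` and `D = B + (a/b) A`. The commutator relation says exactly that `D A = C D`,
so `D A^m = C^m D` for all `m`. Expanding `D` and using that `A` commutes with `C^m` gives the
formula.
-/

/-- If `BA − AB = aA + bB` with `b ≠ 0`, then
`B·A^m = (A + bI)^m·B − (a/b)·A·(A^m − (A + bI)^m)` for every `m ≥ 0`. -/
theorem mul_pow_of_commutator (n : ℕ) (A B : Matrix (Fin n) (Fin n) ℝ) (a b : ℝ)
    (hb : b ≠ 0) (h : B * A - A * B = a • A + b • B) (m : ℕ) :
    B * A ^ m
      = (A + b • (1 : Matrix (Fin n) (Fin n) ℝ)) ^ m * B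
        - (a / b) • (A * (A ^ m - (A + b • (1 : Matrix (Fin n) (Fin n) ℝ)) ^ m)) := by
  have hD : SemiconjBy (B + (a / b) • A) A (A + b • (1 : Matrix (Fin n) (Fin n) ℝ)) := by
    have hab : a / b * b = a := div_mul_cancel₀ a hb
    have hBA : B * A = a • A + b • B + A * B := sub_eq_iff_eq_add.mp h
    simp only [SemiconjBy, add_mul, mul_add, smul_mul_assoc, mul_smul_comm, one_mul, smul_add,
      smul_smul, hab, hBA]
    abel
  have hC : Commute A ((A + b • (1 : Matrix (Fin n) (Fin n) ℝ)) ^ m) :=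
    ((Commute.refl A).add_right ((Commute.one_right A).smul_right b)).pow_right m
  have hm := (hD.pow_right m).eq
  rw [add_mul, mul_add, smul_mul_assoc, mul_smul_comm, ← hC.eq] at hm
  rw [mul_sub, smul_sub, eq_sub_of_add_eq hm]
  abel
end
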